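/- There exists a (non-deterministic) LSTS TS and a strong stubborn set r (a reduction function satisfying D0, D1, D2, V, I and L at every state, with finite reduced LSTS) such that the reduced LSTS TS_r is not stutter-trace equivalent to TS; hence strong stubborn sets with condition D1 do not in general preserve stutter-trace equivalence. -/

import Mathlib

open scoped Classical

/-- The subsequence of an `Option`-valued sequence consisting of the values at the
indices satisfying `P`, in increasing order (`none` past the end when only finitely
many indices satisfy `P`). -/
noncomputable def subseq {α : Type*} (g : ℕ → Option α) (P : ℕ → Prop) : ℕ → Option α :=
  fun k => if {i | P i}.Infinite ∨ k < {i | P i}.ncard then g (Nat.nth P k) else none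

/-- The no-stutter trace of a sequence of labels (`none` marking positions past the end
of a finite sequence): the subsequence of those values at indices `i` such that `i = 0`
or the value differs from the one at `i - 1`. -/
noncomputable def nsTrace {α : Type*} (g : ℕ → Option α) : ℕ → Option α :=
  subseq g fun i => (g i).isSome ∧ (i = 0 ∨ g i ≠ g (i - 1))

/-- A (finite or infinite) path of a transition relation `Tr`.  `len` is the number of
transitions (`⊤` for an infinite path); the values of `states` and `acts` beyond the
length are irrelevant junk. -/
structure TPath {S : Type*} {A : Type*} (Tr : S → A → S → Prop) where
  states : ℕ → S
  acts : ℕ → A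
  len : ℕ∞
  valid : ∀ i : ℕ, (i : ℕ∞) < len → Tr (states i) (acts i) (states (i + 1))

/-- The sequence of state labels along a path (`none` beyond the end). -/
noncomputable def TPath.labelSeq {S A l : Type*}
    {Tr : S → A → S → Prop} (p : TPath Tr) (L : S → Set l) : ℕ → Option (Set l) :=
  fun i => if (i : ℕ∞) ≤ p.len then some (L (p.states i)) else none

/-- The sequence of actions along a path (`none` beyond the end). -/
noncomputable def TPath.actSeq {S A : Type*}
    {Tr : S → A → S → Prop} (p : TPath Tr) : ℕ → Option A :=
  fun i => if (i : ℕ∞) < p.len then some (p.acts i) else none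

/-- Stutter equivalence of two paths with respect to labellings `L₁`, `L₂`:
both are finite or both are infinite, and they have the same no-stutter trace. -/
def StutterEquiv {S₁ A₁ S₂ A₂ l : Type*}
    {Tr₁ : S₁ → A₁ → S₁ → Prop} {Tr₂ : S₂ → A₂ → S₂ → Prop}
    (L₁ : S₁ → Set l) (L₂ : S₂ → Set l) (p : TPath Tr₁) (q : TPath Tr₂) : Prop :=
  (p.len = ⊤ ↔ q.len = ⊤) ∧ nsTrace (p.labelSeq L₁) = nsTrace (q.labelSeq L₂)

/-- Weak equivalence of two paths with respect to a set `I` of invisible actions: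
both are finite or both are infinite, and the projections of their action sequences
onto the visible actions (those not in `I`) are equal. -/
def WeakEquiv {S₁ S₂ A : Type*}
    {Tr₁ : S₁ → A → S₁ → Prop} {Tr₂ : S₂ → A → S₂ → Prop}
    (I : Set A) (p : TPath Tr₁) (q : TPath Tr₂) : Prop :=
  (p.len = ⊤ ↔ q.len = ⊤) ∧
    subseq p.actSeq (fun i => (i : ℕ∞) < p.len ∧ p.acts i ∉ I) =
      subseq q.actSeq (fun i => (i : ℕ∞) < q.len ∧ q.acts i ∉ I)

/-- A finite run of length `n` along `Tr`: `σ 0 -α 0→ σ 1 -α 1→ ⋯ -α (n-1)→ σ n`. -/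
def FinRun {S A : Type*} (Tr : S → A → S → Prop) (n : ℕ) (σ : ℕ → S) (α : ℕ → A) : Prop :=
  ∀ i < n, Tr (σ i) (α i) (σ (i + 1))

/-- `a` is a key action in `s` w.r.t. the reduction function `r`: for all
`a₁, …, aₙ ∉ r s` and paths `s -a₁…aₙ→ s'`, the action `a` is enabled in `s'`. -/
def KeyAction {S A : Type*} (Tr : S → A → S → Prop) (r : S → Set A) (s : S) (a : A) : Prop :=
  ∀ (n : ℕ) (σ : ℕ → S) (α : ℕ → A), σ 0 = s → FinRun Tr n σ α →
    (∀ i < n, α i ∉ r s) → ∃ t, Tr (σ n) a t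

/-- Condition D0: if some action is enabled in `s`, then `r s` contains an enabled action. -/
def CondD0 {S A : Type*} (Tr : S → A → S → Prop) (r : S → Set A) (s : S) : Prop :=
  (∃ a t, Tr s a t) → ∃ a ∈ r s, ∃ t, Tr s a t

/-- Condition D1. -/
def CondD1 {S A : Type*} (Tr : S → A → S → Prop) (r : S → Set A) (s : S) : Prop :=
  ∀ a ∈ r s, ∀ (n : ℕ) (σ : ℕ → S) (α : ℕ → A) (sn' : S),
    σ 0 = s → FinRun Tr n σ α → (∀ i < n, α i ∉ r s) → Tr (σ n) a sn' →
    ∃ σ' : ℕ → S, Tr s a (σ' 0) ∧ FinRun Tr n σ' α ∧ σ' n = sn'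

/-- Condition D1' (strengthened D1): additionally, if `a` is invisible then
`sᵢ -a→ s'ᵢ` for every `1 ≤ i < n`. -/
def CondD1' {S A : Type*} (Tr : S → A → S → Prop) (I : Set A) (r : S → Set A) (s : S) : Prop :=
  ∀ a ∈ r s, ∀ (n : ℕ) (σ : ℕ → S) (α : ℕ → A) (sn' : S),
    σ 0 = s → FinRun Tr n σ α → (∀ i < n, α i ∉ r s) → Tr (σ n) a sn' →
    ∃ σ' : ℕ → S, Tr s a (σ' 0) ∧ FinRun Tr n σ' α ∧ σ' n = sn' ∧
      (a ∈ I → ∀ i, 1 ≤ i → i < n → Tr (σ i) a (σ' i))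

/-- Condition D2: every enabled action of `r s` is a key action in `s`. -/
def CondD2 {S A : Type*} (Tr : S → A → S → Prop) (r : S → Set A) (s : S) : Prop :=
  ∀ a ∈ r s, (∃ t, Tr s a t) → KeyAction Tr r s a

/-- Condition D2w: if some action is enabled in `s`, then `r s` contains a key action. -/
def CondD2w {S A : Type*} (Tr : S → A → S → Prop) (r : S → Set A) (s : S) : Prop :=
  (∃ a t, Tr s a t) → ∃ a ∈ r s, KeyAction Tr r s a

/-- Condition V: if `r s` contains an enabled visible action, it contains all visible
actions. -/
def CondV {S A : Type*} (Tr : S → A → S → Prop) (I : Set A) (r : S → Set A) (s : S) : Prop :=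
  (∃ a ∈ r s, a ∉ I ∧ ∃ t, Tr s a t) → ∀ a, a ∉ I → a ∈ r s

/-- Condition I: if an invisible action is enabled in `s`, then `r s` contains an
invisible key action. -/
def CondI {S A : Type*} (Tr : S → A → S → Prop) (I : Set A) (r : S → Set A) (s : S) : Prop :=
  (∃ a ∈ I, ∃ t, Tr s a t) → ∃ a ∈ r s, a ∈ I ∧ KeyAction Tr r s a

/-- The states of the reduced LSTS: the smallest set of states containing the initial
state `s0` and closed under transitions labelled with actions of the stubborn set. -/
inductive RedReach {S A : Type*} (Tr : S → A → S → Prop) (r : S → Set A) (s0 : S) : S → Prop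
  | refl : RedReach Tr r s0 s0
  | step {s a t} : RedReach Tr r s0 s → a ∈ r s → Tr s a t → RedReach Tr r s0 t

/-- The transition relation of the reduced LSTS. -/
def RedTr {S A : Type*} (Tr : S → A → S → Prop) (r : S → Set A) (s0 : S) :
    S → A → S → Prop :=
  fun s a t => RedReach Tr r s0 s ∧ a ∈ r s ∧ Tr s a t

/-- Condition L: for every visible action `a`, every cycle in the reduced LSTS
contains a state `s` with `a ∈ r s`. -/
def CondL {S A : Type*} (Tr : S → A → S → Prop) (I : Set A) (r : S → Set A) (s0 : S) : Prop :=
  ∀ a ∉ I, ∀ (n : ℕ) (σ : ℕ → S) (α : ℕ → A), 0 < n →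
    FinRun (RedTr Tr r s0) n σ α → σ n = σ 0 → ∃ i < n, a ∈ r (σ i)

/-- Condition C4: either `r s` consists of all actions, or `r s` contains precisely one
enabled action. -/
def CondC4 {S A : Type*} (Tr : S → A → S → Prop) (r : S → Set A) (s : S) : Prop :=
  r s = Set.univ ∨ ∃! a, a ∈ r s ∧ ∃ t, Tr s a t

/-- `I` is a set of invisible actions w.r.t. the labelling `L`. -/
def InvisibleSet {S A l : Type*} (Tr : S → A → S → Prop) (L : S → Set l) (I : Set A) : Prop :=
  ∀ a ∈ I, ∀ s t, Tr s a t → L s = L t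

/-- Reachability along `Tr`. -/
inductive Reach {S A : Type*} (Tr : S → A → S → Prop) (s0 : S) : S → Prop
  | refl : Reach Tr s0 s0
  | step {s a t} : Reach Tr s0 s → Tr s a t → Reach Tr s0 t

/-- Stutter-trace equivalence of two systems: for every initial path of the one there
is a stutter equivalent initial path of the other, and vice versa. -/
def StutterTraceEquiv {S₁ A₁ S₂ A₂ l : Type*} (Tr₁ : S₁ → A₁ → S₁ → Prop) (i₁ : S₁)
    (L₁ : S₁ → Set l) (Tr₂ : S₂ → A₂ → S₂ → Prop) (i₂ : S₂) (L₂ : S₂ → Set l) : Prop :=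
  (∀ p : TPath Tr₁, p.states 0 = i₁ →
      ∃ q : TPath Tr₂, q.states 0 = i₂ ∧ StutterEquiv L₁ L₂ p q) ∧
  (∀ q : TPath Tr₂, q.states 0 = i₂ →
      ∃ p : TPath Tr₁, p.states 0 = i₁ ∧ StutterEquiv L₁ L₂ p q)

/-- Weak-trace equivalence of two systems with the same set `I` of invisible actions. -/
def WeakTraceEquiv {S₁ S₂ A : Type*} (Tr₁ : S₁ → A → S₁ → Prop) (i₁ : S₁)
    (Tr₂ : S₂ → A → S₂ → Prop) (i₂ : S₂) (I : Set A) : Prop :=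
  (∀ p : TPath Tr₁, p.states 0 = i₁ → ∃ q : TPath Tr₂, q.states 0 = i₂ ∧ WeakEquiv I p q) ∧
  (∀ q : TPath Tr₂, q.states 0 = i₂ → ∃ p : TPath Tr₁, p.states 0 = i₁ ∧ WeakEquiv I p q)

/-- An LSTS is labelled consistently iff any two weakly equivalent paths starting in a
common state are stutter equivalent. -/
def LabelledConsistently {S A l : Type*} (Tr : S → A → S → Prop) (L : S → Set l)
    (I : Set A) : Prop :=
  ∀ p q : TPath Tr, p.states 0 = q.states 0 → WeakEquiv I p q → StutterEquiv L L p q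

/-- Label sequence of an explicitly given finite run with `n` transitions. -/
noncomputable def finLabelSeq {S l : Type*} (L : S → Set l) (n : ℕ) (σ : ℕ → S) :
    ℕ → Option (Set l) :=
  fun i => if i ≤ n then some (L (σ i)) else none

/-- Stutter equivalence of two explicitly given finite runs (with `n`, resp. `m`,
transitions); both are finite, so it only requires equality of no-stutter traces. -/
def FinStutterEquiv {S l : Type*} (L : S → Set l) (n : ℕ) (σ : ℕ → S) (m : ℕ)
    (τ : ℕ → S) : Prop :=
  nsTrace (finLabelSeq L n σ) = nsTrace (finLabelSeq L m τ)

/-- Stutter equivalence of two explicitly given infinite runs; both are infinite, so it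
only requires equality of no-stutter traces. -/
def InfStutterEquiv {S l : Type*} (L : S → Set l) (σ τ : ℕ → S) : Prop :=
  nsTrace (fun i => some (L (σ i))) = nsTrace (fun i => some (L (τ i)))

/-- Transitions of the counterexample; actions: `0` is the invisible action, `1` and `2`
are visible. -/
def cexTr (s : Fin 7) (a : Fin 3) (t : Fin 7) : Prop :=
  (s, a, t) ∈ ([(0, 1, 1), (1, 2, 2), (0, 0, 4), (1, 0, 5), (2, 0, 3),
    (4, 1, 5), (4, 1, 6), (6, 2, 3)] : List (Fin 7 × Fin 3 × Fin 7))

/-- Reduction function of the counterexample. -/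
def cexR (s : Fin 7) : Set (Fin 3) := {a | s = 0 → a = 0}

/-- Labelling of the counterexample. -/
def cexL (s : Fin 7) : Set Unit := {_u | s = 1 ∨ s = 5}

theorem cexL_eq {s t : Fin 7} : cexL s = cexL t ↔ ((s = 1 ∨ s = 5) ↔ (t = 1 ∨ t = 5)) := by
  constructor
  · intro h
    exact (Set.ext_iff.1 h ())
  · intro h
    ext u
    exact h

theorem cex_out0 : ∀ a t, cexTr 0 a t → (a = 0 ∧ t = 4) ∨ (a = 1 ∧ t = 1) := by
  unfold cexTr; decide
theorem cex_out1 : ∀ a t, cexTr 1 a t → (a = 0 ∧ t = 5) ∨ (a = 2 ∧ t = 2) := by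
  unfold cexTr; decide
theorem cex_out2 : ∀ a t, cexTr 2 a t → a = 0 ∧ t = 3 := by
  unfold cexTr; decide
theorem cex_out4 : ∀ a t, cexTr 4 a t → t = 5 ∨ t = 6 := by
  unfold cexTr; decide
theorem cex_out5 : ∀ a t, ¬ cexTr 5 a t := by
  unfold cexTr; decide
theorem cex_out6 : ∀ a t, cexTr 6 a t → t = 3 := by
  unfold cexTr; decide
theorem cex_out3 : ∀ a t, ¬ cexTr 3 a t := by
  unfold cexTr; decide

theorem cex_run0 (n : ℕ) (σ : ℕ → Fin 7) (α : ℕ → Fin 3) (h0 : σ 0 = 0)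
    (hr : FinRun cexTr n σ α) (ha : ∀ i < n, α i ∉ cexR 0) :
    n = 0 ∨ (n = 1 ∧ α 0 = 1 ∧ σ 1 = 1) ∨ (n = 2 ∧ α 0 = 1 ∧ α 1 = 2 ∧ σ 2 = 2) := by
  have ha' : ∀ i < n, α i ≠ 0 := fun i hi h => ha i hi (fun _ => h)
  rcases Nat.lt_or_ge 0 n with h | h
  swap
  · left; omega
  have t0 := hr 0 h
  rw [h0] at t0
  have t0 := (cex_out0 _ _ t0).resolve_left (fun hh => ha' 0 h hh.1)
  rcases Nat.lt_or_ge 1 n with h1 | h1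
  swap
  · right; left; exact ⟨by omega, t0.1, t0.2⟩
  have t1 := hr 1 h1
  rw [t0.2] at t1
  have t1 := (cex_out1 _ _ t1).resolve_left (fun hh => ha' 1 h1 hh.1)
  rcases Nat.lt_or_ge 2 n with h2 | h2
  swap
  · right; right; exact ⟨by omega, t0.1, t1.1, t1.2⟩
  have t2 := hr 2 h2
  rw [t1.2] at t2
  exact absurd (cex_out2 _ _ t2).1 (ha' 2 h2)

theorem cex_key0 : KeyAction cexTr cexR 0 0 := by
  intro n σ α h0 hr ha
  rcases cex_run0 n σ α h0 hr ha with h | ⟨h, -, h'⟩ | ⟨h, -, -, h'⟩ <;> subst h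
  · rw [h0]; exact ⟨4, by unfold cexTr; decide⟩
  · rw [h']; exact ⟨5, by unfold cexTr; decide⟩
  · rw [h']; exact ⟨3, by unfold cexTr; decide⟩

theorem cex_D1_0 : CondD1 cexTr cexR 0 := by
  intro a har n σ α sn' h0 hr ha ht
  have haz : a = 0 := har rfl
  subst haz
  rcases cex_run0 n σ α h0 hr ha with h | ⟨h, e0, h'⟩ | ⟨h, e0, e1, h'⟩ <;> subst h
  · rw [h0] at ht
    exact ⟨fun _ => sn', ht, fun i hi => absurd hi (by omega), rfl⟩
  · rw [h'] at ht
    have : sn' = 5 := by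
      rcases cex_out1 _ _ ht with h | h
      · exact h.2
      · exact absurd h.1 (by decide)
    subst this
    refine ⟨fun i => if i = 0 then 4 else 5, by unfold cexTr; decide, ?_, rfl⟩
    intro i hi
    obtain rfl : i = 0 := by omega
    rw [e0]; unfold cexTr; decide
  · rw [h'] at ht
    have : sn' = 3 := (cex_out2 _ _ ht).2
    subst this
    refine ⟨fun i => if i = 0 then 4 else if i = 1 then 6 else 3, by unfold cexTr; decide, ?_, rfl⟩
    intro i hi
    obtain rfl | rfl : i = 0 ∨ i = 1 := by omega
    · rw [e0]; unfold cexTr; decide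
    · rw [e1]; unfold cexTr; decide

theorem cexR_univ {s : Fin 7} (hs : s ≠ 0) (a : Fin 3) : a ∈ cexR s := fun h => absurd h hs

theorem cex_run_ne {s : Fin 7} (hs : s ≠ 0) {n : ℕ} {α : ℕ → Fin 3}
    (h : ∀ i < n, α i ∉ cexR s) : n = 0 := by
  by_contra hn
  exact h 0 (by omega) (cexR_univ hs _)

theorem cex_key_ne {s : Fin 7} (hs : s ≠ 0) {a : Fin 3} (h : ∃ t, cexTr s a t) :
    KeyAction cexTr cexR s a := by
  intro n σ α h0 _ ha
  have hn := cex_run_ne hs ha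
  subst hn
  rw [h0]; exact h

theorem cex_conds (s : Fin 7) : CondD0 cexTr cexR s ∧ CondD1 cexTr cexR s ∧
    CondD2 cexTr cexR s ∧ CondV cexTr {0} cexR s ∧ CondI cexTr {0} cexR s := by
  by_cases hs : s = 0
  · subst hs
    refine ⟨?_, cex_D1_0, ?_, ?_, ?_⟩
    · intro _
      exact ⟨0, fun _ => rfl, 4, by unfold cexTr; decide⟩
    · intro a ha _
      have haz : a = 0 := ha rfl
      subst haz
      exact cex_key0
    · rintro ⟨a, ha, hI, -⟩
      exact absurd (ha rfl) hI
    · intro _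
      exact ⟨0, fun _ => rfl, rfl, cex_key0⟩
  · refine ⟨?_, ?_, ?_, ?_, ?_⟩
    · rintro ⟨a, t, h⟩
      exact ⟨a, cexR_univ hs a, t, h⟩
    · intro a _ n σ α sn' h0 _ ha ht
      have hn := cex_run_ne hs ha
      subst hn
      rw [h0] at ht
      exact ⟨fun _ => sn', ht, fun i hi => absurd hi (by omega), rfl⟩
    · intro a _ h
      exact cex_key_ne hs h
    · intro _ a _
      exact cexR_univ hs a
    · rintro ⟨a, ha, h⟩
      exact ⟨a, cexR_univ hs a, ha, cex_key_ne hs h⟩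

/-- A rank strictly increasing along transitions: the counterexample is acyclic. -/
def cexRank (s : Fin 7) : ℕ := ![0, 1, 2, 3, 1, 2, 2] s

theorem cexRank_lt : ∀ s a t, cexTr s a t → cexRank s < cexRank t := by
  unfold cexTr; decide

theorem cex_condL : CondL cexTr {0} cexR 0 := by
  intro a _ n σ α hn hr hc
  exfalso
  have key : ∀ m, m ≤ n → cexRank (σ 0) + m ≤ cexRank (σ m) := by
    intro m
    induction m with
    | zero => intro _; simp
    | succ k ih =>
      intro hk
      have h1 := ih (by omega)
      have h2 := cexRank_lt _ _ _ (hr k (by omega)).2.2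
      omega
  have := key n le_rfl
  rw [hc] at this
  omega

/-- A run of the reduced system has at most two positions where the label changes. -/
theorem cex_red_trace (p : TPath (RedTr cexTr cexR 0)) (h0 : p.states 0 = 0) :
    nsTrace (p.labelSeq cexL) 2 = none := by
  have hsub : {i | (p.labelSeq cexL i).isSome ∧
      (i = 0 ∨ p.labelSeq cexL i ≠ p.labelSeq cexL (i - 1))} ⊆ (({0, 2} : Finset ℕ) : Set ℕ) := by
    rintro i ⟨hs, hi⟩
    have hlen : (i : ℕ∞) ≤ p.len := by
      by_contra hcon
      simp [TPath.labelSeq, hcon] at hs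
    have hlt : ∀ j, j < i → RedTr cexTr cexR 0 (p.states j) (p.acts j) (p.states (j + 1)) :=
      fun j hj => p.valid j (lt_of_lt_of_le (by exact_mod_cast hj) hlen)
    have hle : ∀ j, j ≤ i → p.labelSeq cexL j = some (cexL (p.states j)) := by
      intro j hj
      have : (j : ℕ∞) ≤ p.len := le_trans (by exact_mod_cast hj) hlen
      simp [TPath.labelSeq, this]
    rcases Nat.eq_zero_or_pos i with h | hpos
    · simp [h]
    have hne : p.labelSeq cexL i ≠ p.labelSeq cexL (i - 1) := hi.resolve_left (by omega)
    rw [hle i le_rfl, hle (i - 1) (by omega)] at hne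
    have t0 := hlt 0 hpos
    rw [h0] at t0
    have s1 : p.states 1 = 4 := by
      rcases cex_out0 _ _ t0.2.2 with h | h
      · exact h.2
      · have := t0.2.1 rfl
        rw [this] at h
        exact absurd h.1 (by decide)
    by_cases h1 : i = 1
    · subst h1
      exfalso
      apply hne
      simp only [Nat.sub_self, h0, s1, Option.some.injEq, cexL_eq]
      decide
    by_cases h2 : i = 2
    · simp [h2]
    exfalso
    have t1 := (hlt 1 (by omega)).2.2
    have t2 := (hlt 2 (by omega)).2.2
    rw [s1] at t1
    have s2 : p.states 2 = 6 := by
      rcases cex_out4 _ _ t1 with h | h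
      · rw [show (1 + 1 : ℕ) = 2 from rfl] at h
        rw [h] at t2
        exact absurd t2 (cex_out5 _ _)
      · exact h
    rw [s2] at t2
    have s3 : p.states 3 = 3 := cex_out6 _ _ t2
    by_cases h3 : i = 3
    · subst h3
      apply hne
      simp only [show 3 - 1 = 2 from rfl, s2, s3, Option.some.injEq, cexL_eq]
      decide
    · have t3 := (hlt 3 (by omega)).2.2
      rw [s3] at t3
      exact cex_out3 _ _ t3
  unfold nsTrace subseq
  rw [if_neg]
  rintro (h | h)
  · exact h ((Finset.finite_toSet _).subset hsub)
  · have := Set.ncard_le_ncard hsub (Finset.finite_toSet _)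
    rw [Set.ncard_coe_finset] at this
    have h3 : ({0, 2} : Finset ℕ).card = 2 := rfl
    exact absurd (lt_of_lt_of_le h (this.trans h3.le)) (lt_irrefl 2)

/-- The path of the full system that is lost in the reduced one. -/
def cexPath : TPath cexTr where
  states := fun i => if i = 0 then 0 else if i = 1 then 1 else 2
  acts := fun i => if i = 0 then 1 else 2
  len := 2
  valid := by
    intro i hi
    have hi' : i < 2 := by exact_mod_cast hi
    obtain rfl | rfl : i = 0 ∨ i = 1 := by omega
    · unfold cexTr; decide
    · unfold cexTr; decide

theorem cexPath_trace : nsTrace (cexPath.labelSeq cexL) 2 ≠ none := by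
  have hle : ∀ j, j ≤ 2 → cexPath.labelSeq cexL j = some (cexL (cexPath.states j)) := by
    intro j hj
    have : (j : ℕ∞) ≤ cexPath.len := by
      show (j : ℕ∞) ≤ 2
      exact_mod_cast hj
    simp [TPath.labelSeq, this]
  have hsub : (({0, 1, 2} : Finset ℕ) : Set ℕ) ⊆ {i | (cexPath.labelSeq cexL i).isSome ∧
      (i = 0 ∨ cexPath.labelSeq cexL i ≠ cexPath.labelSeq cexL (i - 1))} := by
    intro i hi
    have hi' : i = 0 ∨ i = 1 ∨ i = 2 := by simpa using hi
    refine ⟨by rw [hle i (by omega)]; rfl, ?_⟩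
    rcases hi' with rfl | rfl | rfl
    · left; rfl
    · right
      rw [hle 1 (by omega), hle (1 - 1) (by omega)]
      simp only [ne_eq, Option.some.injEq, cexL_eq, cexPath]
      decide
    · right
      rw [hle 2 (by omega), hle (2 - 1) (by omega)]
      simp only [ne_eq, Option.some.injEq, cexL_eq, cexPath]
      decide
  have hcard : ∀ hf : {i | (cexPath.labelSeq cexL i).isSome ∧
      (i = 0 ∨ cexPath.labelSeq cexL i ≠ cexPath.labelSeq cexL (i - 1))}.Finite,
      2 < hf.toFinset.card := by
    intro hf
    have h : ({0, 1, 2} : Finset ℕ) ⊆ hf.toFinset := by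
      intro i hi
      exact hf.mem_toFinset.2 (hsub hi)
    have := Finset.card_le_card h
    have h3 : ({0, 1, 2} : Finset ℕ).card = 3 := rfl
    omega
  have hm := Nat.nth_mem 2 hcard
  unfold nsTrace subseq
  rw [if_pos]
  · intro h
    have := hm.1
    rw [h] at this
    simp at this
  · by_cases hf : {i | (cexPath.labelSeq cexL i).isSome ∧
      (i = 0 ∨ cexPath.labelSeq cexL i ≠ cexPath.labelSeq cexL (i - 1))}.Finite
    · right
      rw [Set.ncard_eq_toFinset_card _ hf]
      exact hcard hf
    · left; exact hf

/-- There exists a (non-deterministic) LSTS `TS` and a strong stubborn set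
`r` (a reduction function satisfying D0, D1, D2, V, I and L at every state, with finite
reduced LSTS) such that the reduced LSTS `TS_r` is not stutter-trace equivalent to `TS`. -/
theorem strong_stubborn_sets_with_D1_do_not_preserve_stutter_trace_equivalence :
    ∃ (S A AP : Type) (Tr : S → A → S → Prop) (s0 : S) (L : S → Set AP) (I : Set A)
      (r : S → Set A),
      InvisibleSet Tr L I ∧
      (∃ s a t t', Tr s a t ∧ Tr s a t' ∧ t ≠ t') ∧
      (∀ s, CondD0 Tr r s ∧ CondD1 Tr r s ∧ CondD2 Tr r s ∧ CondV Tr I r s ∧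
        CondI Tr I r s) ∧
      CondL Tr I r s0 ∧
      {s | RedReach Tr r s0 s}.Finite ∧
      ¬ StutterTraceEquiv (RedTr Tr r s0) s0 L Tr s0 L := by
  refine ⟨Fin 7, Fin 3, Unit, cexTr, 0, cexL, {0}, cexR, ?_, ?_, cex_conds, cex_condL,
    Set.toFinite _, ?_⟩
  · have h : ∀ s t, cexTr s 0 t → ((s = 1 ∨ s = 5) ↔ (t = 1 ∨ t = 5)) := by
      unfold cexTr; decide
    intro a ha s t hst
    have haz : a = 0 := ha
    subst haz
    exact cexL_eq.2 (h s t hst)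
  · exact ⟨4, 1, 5, 6, by unfold cexTr; decide, by unfold cexTr; decide, by decide⟩
  · rintro ⟨-, h⟩
    obtain ⟨p, hp, -, htr⟩ := h cexPath rfl
    apply cexPath_trace
    rw [← htr]
    exact cex_red_trace p hp
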